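/- Let T > 0 and α > 0. Let u : ℝ² × [0,T] → ℝ², θ : ℝ² × [0,T] → ℝ, and p : ℝ² × [0,T] → ℝ be smooth functions, ℤ²-periodic in x, such that for every t the field u(·,t) is divergence-free, and pointwise on ℝ² × [0,T] they satisfy the inviscid non-diffusive Boussinesq–Voigt system: ∂_t(u − α²Δu) + (u·∇)u + ∇p = θ e₂ and ∂_t θ + u·∇θ = 0, with e₂ = (0,1). Then for every t ∈ [0,T]: ( ‖u(t)‖_{L²}² + α² ‖∇u(t)‖_{L²}² )^{1/2} ≤ ( ‖u(0)‖_{L²}² + α² ‖∇u(0)‖_{L²}² )^{1/2} + t ‖θ(0)‖_{L²}, where all norms are over Q = [0,1]². -/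

import Mathlib

/-!
Let `E(t) = ‖u(t)‖² + α² ‖∇u(t)‖²`. Testing the momentum equation with `u` and integrating by
parts over the period cell, the nonlinear and pressure terms become divergences of periodic fields
(because `div u = 0`) and drop out, which leaves `E' = 2 ∫ θ u₂` (`energy_balance`). In the same
way the transport equation gives conservation of `‖θ‖` (`transport_L2`). By Cauchy–Schwarz,
`E' ≤ 2 ‖θ(0)‖ √E`, so `√E` grows at most linearly with slope `‖θ(0)‖` (`sqrt_growth`).

Both integrations by parts rest on one fact: the divergence of a smooth periodic field has
integral zero over `Q2` (`integral_div_eq_zero`).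
-/

open MeasureTheory

/-- Partial derivative in direction `j`. -/
noncomputable def pd (j : Fin 2) (f : (Fin 2 → ℝ) → ℝ) (x : Fin 2 → ℝ) : ℝ :=
  fderiv ℝ f x (Pi.single j 1)

/-- `f` is `ℤ²`-periodic. -/
def Periodic2 (f : (Fin 2 → ℝ) → ℝ) : Prop :=
  ∀ (x : Fin 2 → ℝ) (k : Fin 2 → ℤ), f (x + fun i => (k i : ℝ)) = f x

/-- The fundamental domain `Q = [0,1]²`. -/
def Q2 : Set (Fin 2 → ℝ) := Set.Icc 0 1

/-- Laplacian of a scalar function. -/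
noncomputable def lap (f : (Fin 2 → ℝ) → ℝ) (x : Fin 2 → ℝ) : ℝ :=
  ∑ j : Fin 2, pd j (pd j f) x

/-- Standard basis vector `e₂ = (0,1)`. -/
noncomputable def e2 (i : Fin 2) : ℝ := if i = 1 then 1 else 0

/-- Joint smoothness in `(t, x)` of a time-dependent scalar field. -/
def Sm (f : ℝ → (Fin 2 → ℝ) → ℝ) : Prop :=
  ContDiff ℝ (⊤ : ℕ∞) (fun q : ℝ × (Fin 2 → ℝ) => f q.1 q.2)

/-- The time derivative `∂ₜ f`, again as a time-dependent scalar field. -/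
noncomputable def dt (f : ℝ → (Fin 2 → ℝ) → ℝ) (t : ℝ) (x : Fin 2 → ℝ) : ℝ :=
  deriv (fun s => f s x) t

/-! ### Calculus of jointly smooth fields -/

lemma Sm.diff {f : ℝ → (Fin 2 → ℝ) → ℝ} (hf : Sm f) :
    Differentiable ℝ (fun q : ℝ × (Fin 2 → ℝ) => f q.1 q.2) :=
  ContDiff.differentiable hf (by simp)

lemma Sm.slice {f : ℝ → (Fin 2 → ℝ) → ℝ} (hf : Sm f) (t : ℝ) :
    ContDiff ℝ (⊤ : ℕ∞) (f t) :=
  ContDiff.comp (g := fun q : ℝ × (Fin 2 → ℝ) => f q.1 q.2) (f := fun x => (t, x)) hf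
    (by fun_prop)

lemma Sm.slice_time {f : ℝ → (Fin 2 → ℝ) → ℝ} (hf : Sm f) (x : Fin 2 → ℝ) :
    ContDiff ℝ (⊤ : ℕ∞) (fun s => f s x) :=
  ContDiff.comp (g := fun q : ℝ × (Fin 2 → ℝ) => f q.1 q.2) (f := fun s : ℝ => (s, x)) hf
    (by fun_prop)

lemma Sm.diff_slice {f : ℝ → (Fin 2 → ℝ) → ℝ} (hf : Sm f) (t : ℝ) :
    Differentiable ℝ (f t) :=
  (hf.slice t).differentiable (by simp)

lemma Sm.hasDerivAt {f : ℝ → (Fin 2 → ℝ) → ℝ} (hf : Sm f) (t : ℝ) (x : Fin 2 → ℝ) :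
    HasDerivAt (fun s => f s x) (dt f t x) t :=
  ((hf.slice_time x).differentiable (by simp) t).hasDerivAt

lemma Sm.pd_eq {f : ℝ → (Fin 2 → ℝ) → ℝ} (hf : Sm f) (j : Fin 2) (t : ℝ) (x : Fin 2 → ℝ) :
    pd j (f t) x =
      fderiv ℝ (fun q : ℝ × (Fin 2 → ℝ) => f q.1 q.2) (t, x) (0, Pi.single j 1) := by
  have h := (hf.diff (t, x)).hasFDerivAt.comp x (hasFDerivAt_prodMk_right t x)
  have h2 : HasFDerivAt (f t) _ x := h
  rw [pd, h2.fderiv]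
  simp

lemma Sm.dt_eq {f : ℝ → (Fin 2 → ℝ) → ℝ} (hf : Sm f) (t : ℝ) (x : Fin 2 → ℝ) :
    dt f t x = fderiv ℝ (fun q : ℝ × (Fin 2 → ℝ) => f q.1 q.2) (t, x) (1, 0) := by
  have h := (hf.diff (t, x)).hasFDerivAt.comp t (hasFDerivAt_prodMk_left (𝕜 := ℝ) t x)
  have h2 : HasFDerivAt (fun s => f s x) _ t := h
  rw [dt, h2.hasDerivAt.deriv]
  simp

lemma Sm.pd {f : ℝ → (Fin 2 → ℝ) → ℝ} (hf : Sm f) (j : Fin 2) :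
    Sm (fun t => pd j (f t)) := by
  have : ContDiff ℝ (⊤ : ℕ∞) (fun q : ℝ × (Fin 2 → ℝ) =>
      fderiv ℝ (fun q : ℝ × (Fin 2 → ℝ) => f q.1 q.2) q (0, Pi.single j 1)) :=
    (ContDiff.fderiv_right hf (by simp)).clm_apply contDiff_const
  simpa only [Sm, hf.pd_eq] using this

lemma Sm.dt {f : ℝ → (Fin 2 → ℝ) → ℝ} (hf : Sm f) : Sm (dt f) := by
  have : ContDiff ℝ (⊤ : ℕ∞) (fun q : ℝ × (Fin 2 → ℝ) =>
      fderiv ℝ (fun q : ℝ × (Fin 2 → ℝ) => f q.1 q.2) q (1, 0)) :=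
    (ContDiff.fderiv_right hf (by simp)).clm_apply contDiff_const
  simpa only [Sm, hf.dt_eq] using this

lemma fderiv_apply_const {F : ℝ × (Fin 2 → ℝ) → ℝ} (hF : ContDiff ℝ (⊤ : ℕ∞) F)
    (q v w : ℝ × (Fin 2 → ℝ)) :
    fderiv ℝ (fun q => fderiv ℝ F q v) q w = fderiv ℝ (fderiv ℝ F) q w v := by
  have h : DifferentiableAt ℝ (fderiv ℝ F) q :=
    (ContDiff.fderiv_right (m := (⊤ : ℕ∞)) hF (by simp)).differentiable (by simp) q
  rw [fderiv_clm_apply h (differentiableAt_const v)]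
  simp

/-- Symmetry of second derivatives: `∂ₜ ∂ⱼ f = ∂ⱼ ∂ₜ f`. -/
lemma Sm.dt_pd {f : ℝ → (Fin 2 → ℝ) → ℝ} (hf : Sm f) (j : Fin 2) (t : ℝ) (x : Fin 2 → ℝ) :
    _root_.dt (fun s => _root_.pd j (f s)) t x = _root_.pd j (_root_.dt f t) x := by
  rw [(hf.pd j).dt_eq, hf.dt.pd_eq]
  simp only [hf.pd_eq, hf.dt_eq]
  rw [fderiv_apply_const hf, fderiv_apply_const hf]
  have hs : IsSymmSndFDerivAt ℝ (fun q : ℝ × (Fin 2 → ℝ) => f q.1 q.2) (t, x) :=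
    ContDiffAt.isSymmSndFDerivAt (n := (⊤ : ℕ∞)) (ContDiff.contDiffAt hf)
      (by rw [minSmoothness_of_isRCLikeNormedField]; exact WithTop.coe_le_coe.2 le_top)
  exact hs _ _

lemma pd_add {f g : (Fin 2 → ℝ) → ℝ} (hf : Differentiable ℝ f) (hg : Differentiable ℝ g)
    (j : Fin 2) (x : Fin 2 → ℝ) : pd j (fun y => f y + g y) x = pd j f x + pd j g x := by
  simp [pd, fderiv_fun_add (hf x) (hg x)]

lemma pd_sub {f g : (Fin 2 → ℝ) → ℝ} (hf : Differentiable ℝ f) (hg : Differentiable ℝ g)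
    (j : Fin 2) (x : Fin 2 → ℝ) : pd j (fun y => f y - g y) x = pd j f x - pd j g x := by
  simp [pd, fderiv_fun_sub (hf x) (hg x)]

lemma pd_mul {f g : (Fin 2 → ℝ) → ℝ} (hf : Differentiable ℝ f) (hg : Differentiable ℝ g)
    (j : Fin 2) (x : Fin 2 → ℝ) :
    pd j (fun y => f y * g y) x = f x * pd j g x + g x * pd j f x := by
  simp [pd, fderiv_fun_mul (hf x) (hg x)]

lemma pd_const_mul (c : ℝ) {f : (Fin 2 → ℝ) → ℝ} (hf : Differentiable ℝ f)
    (j : Fin 2) (x : Fin 2 → ℝ) : pd j (fun y => c * f y) x = c * pd j f x := by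
  simp [pd, fderiv_const_mul (hf x)]

lemma Periodic2.pd {f : (Fin 2 → ℝ) → ℝ} (hf : Periodic2 f) (j : Fin 2) :
    Periodic2 (pd j f) := by
  intro x k
  have h : (fun y => f (y + fun i => (k i : ℝ))) = f := funext fun y => hf y k
  have h2 := fderiv_comp_add_right (𝕜 := ℝ) (f := f) (x := x) (fun i => (k i : ℝ))
  rw [h] at h2
  simp [_root_.pd, h2]

lemma Periodic2.dt {f : ℝ → (Fin 2 → ℝ) → ℝ} (hf : ∀ t, Periodic2 (f t)) (t : ℝ) :
    Periodic2 (dt f t) := by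
  intro x k
  simp only [_root_.dt, hf _ x k]

lemma Sm.add {f g : ℝ → (Fin 2 → ℝ) → ℝ} (hf : Sm f) (hg : Sm g) :
    Sm (fun t x => f t x + g t x) := ContDiff.add hf hg

lemma Sm.mul {f g : ℝ → (Fin 2 → ℝ) → ℝ} (hf : Sm f) (hg : Sm g) :
    Sm (fun t x => f t x * g t x) := ContDiff.mul hf hg

lemma Sm.sq {f : ℝ → (Fin 2 → ℝ) → ℝ} (hf : Sm f) :
    Sm (fun t x => f t x ^ 2) := ContDiff.pow hf 2

lemma Sm.sum {f : Fin 2 → ℝ → (Fin 2 → ℝ) → ℝ} (hf : ∀ i, Sm (f i)) :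
    Sm (fun t x => ∑ i : Fin 2, f i t x) := ContDiff.sum fun i _ => hf i

lemma Sm.dt_sq {f : ℝ → (Fin 2 → ℝ) → ℝ} (hf : Sm f) (t : ℝ) (x : Fin 2 → ℝ) :
    _root_.dt (fun s y => f s y ^ 2) t x = 2 * (f t x * _root_.dt f t x) := by
  have h := ((hf.hasDerivAt t x).fun_pow 2).deriv
  rw [_root_.dt, h]
  push_cast
  ring

lemma Sm.dt_sum {f : Fin 2 → ℝ → (Fin 2 → ℝ) → ℝ} (hf : ∀ i, Sm (f i)) (t : ℝ)
    (x : Fin 2 → ℝ) :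
    _root_.dt (fun s y => ∑ i : Fin 2, f i s y) t x = ∑ i : Fin 2, _root_.dt (f i) t x :=
  (HasDerivAt.fun_sum fun i _ => (hf i).hasDerivAt t x).deriv

/-! ### Integration over the fundamental domain -/

lemma integrableOn_Q2 {f : (Fin 2 → ℝ) → ℝ} (hf : Continuous f) : IntegrableOn f Q2 :=
  hf.continuousOn.integrableOn_compact isCompact_Icc

/-- The divergence of a smooth periodic vector field integrates to zero over a period cell:
the integrals over opposite faces cancel in the divergence theorem. -/
lemma integral_div_eq_zero {F : Fin 2 → (Fin 2 → ℝ) → ℝ}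
    (hF : ∀ j, ContDiff ℝ (⊤ : ℕ∞) (F j)) (hper : ∀ j, Periodic2 (F j)) :
    ∫ x in Q2, ∑ j : Fin 2, pd j (F j) x = 0 := by
  have hc : ∀ j, Continuous (pd j (F j)) := fun j =>
    ((hF j).continuous_fderiv (by simp)).clm_apply continuous_const
  have h := integral_divergence_of_hasFDerivAt_off_countable' (n := 1) (0 : Fin 2 → ℝ) 1
    zero_le_one F (fun j x => fderiv ℝ (F j) x) ∅ Set.countable_empty
    (fun j => (hF j).continuous.continuousOn)
    (fun x _ j => ((hF j).differentiable (by simp) x).hasFDerivAt)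
    (integrableOn_Q2 (continuous_finsetSum _ fun j _ => hc j))
  refine h.trans (Finset.sum_eq_zero fun i _ => ?_)
  rw [sub_eq_zero]
  congr 1
  ext x
  rw [← hper i (i.insertNth ((0 : Fin 2 → ℝ) i) x) (Pi.single i 1)]
  congr 1
  ext k
  refine Fin.succAboveCases i ?_ (fun l => ?_) k
  · simp
  · simp [Fin.succAbove_ne]

/-- Differentiation under the integral sign over `Q2`. -/
lemma Sm.hasDerivAt_integral {f : ℝ → (Fin 2 → ℝ) → ℝ} (hf : Sm f) (t : ℝ) :
    HasDerivAt (fun s => ∫ x in Q2, f s x) (∫ x in Q2, _root_.dt f t x) t := by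
  -- On the compact set `[t-1, t+1] × Q2` the time derivative is bounded by a constant.
  obtain ⟨C, hC⟩ := ((isCompact_closedBall t 1).prod
    (isCompact_Icc : IsCompact (Set.Icc (0 : Fin 2 → ℝ) 1))).exists_bound_of_continuousOn
    (ContDiff.continuous hf.dt).continuousOn
  have hQ : MeasurableSet Q2 := measurableSet_Icc
  refine (hasDerivAt_integral_of_dominated_loc_of_deriv_le (bound := fun _ => C)
    (Metric.closedBall_mem_nhds t one_pos)
    (Filter.Eventually.of_forall fun s => (hf.slice s).continuous.aestronglyMeasurable)
    (integrableOn_Q2 (hf.slice t).continuous)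
    (hf.dt.slice t).continuous.aestronglyMeasurable ?_
    (integrableOn_Q2 continuous_const)
    (Filter.Eventually.of_forall fun x s _ => hf.hasDerivAt s x)).2
  filter_upwards [ae_restrict_mem hQ] with x hx s hs
  exact hC (s, x) ⟨hs, hx⟩

/-- The Cauchy–Schwarz inequality on `Q2`, from the discriminant of `r ↦ ∫ (r f + g)²`. -/
lemma cauchy_schwarz_Q2 {f g : (Fin 2 → ℝ) → ℝ} (hf : Continuous f) (hg : Continuous g) :
    ∫ x in Q2, f x * g x ≤ √(∫ x in Q2, f x ^ 2) * √(∫ x in Q2, g x ^ 2) := by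
  have hd : discrim (∫ x in Q2, f x ^ 2) (2 * ∫ x in Q2, f x * g x) (∫ x in Q2, g x ^ 2) ≤ 0 := by
    refine discrim_le_zero fun r => ?_
    have h0 : 0 ≤ ∫ x in Q2, (r * f x + g x) ^ 2 := integral_nonneg fun x => sq_nonneg _
    have e : ∫ x in Q2, (r * f x + g x) ^ 2 =
        ∫ x in Q2, (r * r * f x ^ 2 + 2 * r * (f x * g x) + g x ^ 2) := by
      congr 1; ext x; ring
    rw [e, integral_add (integrableOn_Q2 (by fun_prop)) (integrableOn_Q2 (by fun_prop)),
      integral_add (integrableOn_Q2 (by fun_prop)) (integrableOn_Q2 (by fun_prop)),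
      integral_const_mul, integral_const_mul] at h0
    linarith
  rw [← Real.sqrt_mul (integral_nonneg fun x => sq_nonneg _)]
  refine Real.le_sqrt_of_sq_le ?_
  rw [discrim] at hd
  nlinarith

/-- If `E ≥ 0` and `E' ≤ 2 c √E` then `√E` grows at most linearly with slope `c`. The
non-smoothness of the square root at `0` is avoided by working with `√(E + ε)`. -/
lemma sqrt_growth {E E' : ℝ → ℝ} {c T : ℝ} (hc : 0 ≤ c) (hE0 : ∀ t, 0 ≤ E t)
    (hE : ∀ t, HasDerivAt E (E' t) t)
    (hb : ∀ t ∈ Set.Icc 0 T, E' t ≤ 2 * (c * √(E t))) {t : ℝ} (ht : t ∈ Set.Icc 0 T) :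
    √(E t) ≤ √(E 0) + t * c := by
  have key : ∀ ε : ℝ, 0 < ε → √(E t + ε) ≤ √(E 0 + ε) + t * c := by
    intro ε hε
    have hd : ∀ s, HasDerivAt (fun s => √(E s + ε) - s * c)
        (E' s / (2 * √(E s + ε)) - 1 * c) s := fun s =>
      (((hE s).add_const ε).sqrt (by linarith [hE0 s])).sub ((hasDerivAt_id s).mul_const c)
    have hanti : AntitoneOn (fun s => √(E s + ε) - s * c) (Set.Icc 0 T) := by
      refine antitoneOn_of_deriv_nonpos (convex_Icc 0 T)
        (fun s _ => (hd s).continuousAt.continuousWithinAt)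
        (fun s _ => (hd s).differentiableAt.differentiableWithinAt) fun s hs => ?_
      rw [(hd s).deriv, sub_nonpos, one_mul]
      have hpos : 0 < √(E s + ε) := Real.sqrt_pos.2 (by linarith [hE0 s])
      rw [div_le_iff₀ (by positivity)]
      have h1 := hb s (interior_subset hs)
      have h2 : √(E s) ≤ √(E s + ε) := Real.sqrt_le_sqrt (by linarith)
      nlinarith [mul_le_mul_of_nonneg_left h2 hc]
    have := hanti ⟨le_rfl, ht.1.trans ht.2⟩ ht ht.1
    simp only [zero_mul, sub_zero] at this
    linarith
  have lim : ∀ a : ℝ, Filter.Tendsto (fun ε => √(a + ε)) (nhdsWithin 0 (Set.Ioi 0))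
      (nhds (√a)) := fun a => by
    have : Continuous fun ε => √(a + ε) := by fun_prop
    have h := this.tendsto 0
    rw [add_zero] at h
    exact h.mono_left nhdsWithin_le_nhds
  exact le_of_tendsto_of_tendsto (lim _) ((lim _).add_const _)
    (eventually_nhdsWithin_of_forall fun ε hε => key ε hε)

/-! ### The two balance laws -/

/-- A scalar transported by a divergence-free periodic field has constant `L²` norm. -/
lemma transport_L2 {T : ℝ} {v : Fin 2 → ℝ → (Fin 2 → ℝ) → ℝ} {θ : ℝ → (Fin 2 → ℝ) → ℝ}
    (hv : ∀ i, Sm (v i)) (hθ : Sm θ)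
    (hvp : ∀ t i, Periodic2 (v i t)) (hθp : ∀ t, Periodic2 (θ t))
    (hdiv : ∀ t x, ∑ j : Fin 2, pd j (v j t) x = 0)
    (htheta : ∀ t ∈ Set.Icc (0 : ℝ) T, ∀ x,
      dt θ t x + ∑ j : Fin 2, v j t x * pd j (θ t) x = 0)
    {t : ℝ} (ht : t ∈ Set.Icc 0 T) :
    ∫ x in Q2, θ t x ^ 2 = ∫ x in Q2, θ 0 x ^ 2 := by
  have hd := hθ.sq.hasDerivAt_integral
  have hzero : ∀ s ∈ Set.Icc (0 : ℝ) T, ∫ x in Q2, dt (fun s y => θ s y ^ 2) s x = 0 := by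
    intro s hs
    -- `∂ₜ θ² = -div (θ² v)`
    have h0 := integral_div_eq_zero (F := fun j x => v j s x * (θ s x * θ s x))
      (fun j => ((hv j).mul (hθ.mul hθ)).slice s)
      (fun j x k => by simp only [hvp s j x k, hθp s x k])
    rw [← neg_eq_zero, ← integral_neg] at h0
    rw [← h0]
    congr 1
    ext x
    have dv := fun j => (hv j).diff_slice s
    have dθ := hθ.diff_slice s
    have h1 := htheta s hs x
    have h2 := hdiv s x
    simp only [Fin.sum_univ_two] at h1 h2 ⊢
    rw [hθ.dt_sq, pd_mul (dv 0) (dθ.fun_mul dθ), pd_mul (dv 1) (dθ.fun_mul dθ),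
      pd_mul dθ dθ, pd_mul dθ dθ]
    linear_combination 2 * θ s x * h1 + θ s x ^ 2 * h2
  refine constant_of_derivWithin_zero (f := fun s => ∫ x in Q2, θ s x ^ 2)
    (fun s _ => (hd s).differentiableAt.differentiableWithinAt) (fun s hs => ?_) t ht
  have hs' : s ∈ Set.Icc 0 T := ⟨hs.1, hs.2.le⟩
  rw [(hd s).hasDerivWithinAt.derivWithin
    (uniqueDiffOn_Icc (hs.1.trans_lt hs.2) s hs'), hzero s hs']

/-- The energy balance `d/dt (‖v‖² + α² ‖∇v‖²) = 2 ∫ θ v₁`, with components `v₀, v₁`; the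
left side is written with the time derivatives already under the integral signs. -/
lemma energy_balance {α t : ℝ} {v : Fin 2 → ℝ → (Fin 2 → ℝ) → ℝ} {θ p : ℝ → (Fin 2 → ℝ) → ℝ}
    (hv : ∀ i, Sm (v i)) (hp : Sm p)
    (hvp : ∀ t i, Periodic2 (v i t)) (hpp : ∀ t, Periodic2 (p t))
    (hdiv : ∀ t x, ∑ j : Fin 2, pd j (v j t) x = 0)
    (hθ : Sm θ)
    (hmom : ∀ x, ∀ i : Fin 2,
      deriv (fun s => v i s x - α ^ 2 * lap (v i s) x) t
          + (∑ j : Fin 2, v j t x * pd j (v i t) x) + pd i (p t) x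
        = θ t x * e2 i) :
    (∫ x in Q2, dt (fun s y => ∑ i : Fin 2, v i s y ^ 2) t x)
      + α ^ 2 * (∫ x in Q2, dt (fun s y => ∑ i : Fin 2, ∑ j : Fin 2, pd j (v i s) y ^ 2) t x)
      = 2 * ∫ x in Q2, θ t x * v 1 t x := by
  have hA : Sm (fun s y => ∑ i : Fin 2, v i s y ^ 2) := Sm.sum fun i => (hv i).sq
  have hB : Sm (fun s y => ∑ i : Fin 2, ∑ j : Fin 2, pd j (v i s) y ^ 2) :=
    Sm.sum fun i => Sm.sum fun j => ((hv i).pd j).sq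
  -- The flux `F`: the time derivative of the energy density is `2 θ v₁ + div F`.
  have h0 := integral_div_eq_zero
    (F := fun j x => 2 * α ^ 2 * (v 0 t x * pd j (dt (v 0) t) x + v 1 t x * pd j (dt (v 1) t) x)
      - v j t x * (v 0 t x * v 0 t x + v 1 t x * v 1 t x + 2 * p t x))
    (fun j => by
      have h1 := (hv 0).slice t
      have h2 := (hv 1).slice t
      have h3 := (hv j).slice t
      have h4 := hp.slice t
      have h5 := ((hv 0).dt.pd j).slice t
      have h6 := ((hv 1).dt.pd j).slice t
      fun_prop)
    (fun j x k => by
      simp only [hvp t j x k, hvp t 0 x k, hvp t 1 x k, hpp t x k,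
        (Periodic2.dt (fun s => hvp s 0) t).pd j x k,
        (Periodic2.dt (fun s => hvp s 1) t).pd j x k])
  have hF : ∀ x, dt (fun s y => ∑ i : Fin 2, v i s y ^ 2) t x
      + α ^ 2 * dt (fun s y => ∑ i : Fin 2, ∑ j : Fin 2, pd j (v i s) y ^ 2) t x
      = 2 * (θ t x * v 1 t x) + ∑ j : Fin 2, pd j (fun x =>
        2 * α ^ 2 * (v 0 t x * pd j (dt (v 0) t) x + v 1 t x * pd j (dt (v 1) t) x)
        - v j t x * (v 0 t x * v 0 t x + v 1 t x * v 1 t x + 2 * p t x)) x := by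
    intro x
    have dA : dt (fun s y => ∑ i : Fin 2, v i s y ^ 2) t x
        = ∑ i : Fin 2, 2 * (v i t x * dt (v i) t x) := by
      rw [Sm.dt_sum fun i => (hv i).sq]
      exact Finset.sum_congr rfl fun i _ => (hv i).dt_sq t x
    have dB : dt (fun s y => ∑ i : Fin 2, ∑ j : Fin 2, pd j (v i s) y ^ 2) t x
        = ∑ i : Fin 2, ∑ j : Fin 2, 2 * (pd j (v i t) x * pd j (dt (v i) t) x) := by
      rw [Sm.dt_sum fun i => Sm.sum fun j => ((hv i).pd j).sq]
      refine Finset.sum_congr rfl fun i _ => ?_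
      rw [Sm.dt_sum fun j => ((hv i).pd j).sq]
      refine Finset.sum_congr rfl fun j _ => ?_
      rw [((hv i).pd j).dt_sq, (hv i).dt_pd]
    -- `∂ₜ (vᵢ - α² Δ vᵢ) = ∂ₜ vᵢ - α² Δ ∂ₜ vᵢ`
    have dM : ∀ i, deriv (fun s => v i s x - α ^ 2 * lap (v i s) x) t
        = dt (v i) t x - α ^ 2 * ∑ j : Fin 2, pd j (pd j (dt (v i) t)) x := by
      intro i
      have hl : HasDerivAt (fun s => lap (v i s) x)
          (∑ j : Fin 2, pd j (pd j (dt (v i) t)) x) t := by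
        refine HasDerivAt.fun_sum fun j _ => ?_
        have h := (((hv i).pd j).pd j).hasDerivAt t x
        rw [((hv i).pd j).dt_pd,
          show dt (fun s => pd j (v i s)) t = pd j (dt (v i) t) from
            funext fun y => (hv i).dt_pd j t y] at h
        exact h
      exact (((hv i).hasDerivAt t x).sub (hl.const_mul (α ^ 2))).deriv
    have m0 := hmom x 0
    have m1 := hmom x 1
    have hd := hdiv t x
    rw [dM] at m0 m1
    rw [dA, dB]
    have dv := fun j => (hv j).diff_slice t
    have dp := hp.diff_slice t
    have dw := fun i j => ((hv i).dt.pd j).diff_slice t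
    have hdivF : ∀ j, pd j (fun x =>
        2 * α ^ 2 * (v 0 t x * pd j (dt (v 0) t) x + v 1 t x * pd j (dt (v 1) t) x)
        - v j t x * (v 0 t x * v 0 t x + v 1 t x * v 1 t x + 2 * p t x)) x
      = 2 * α ^ 2 * (v 0 t x * pd j (pd j (dt (v 0) t)) x
          + pd j (dt (v 0) t) x * pd j (v 0 t) x
          + v 1 t x * pd j (pd j (dt (v 1) t)) x
          + pd j (dt (v 1) t) x * pd j (v 1 t) x)
        - (v j t x * (2 * v 0 t x * pd j (v 0 t) x + 2 * v 1 t x * pd j (v 1 t) x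
            + 2 * pd j (p t) x)
          + (v 0 t x * v 0 t x + v 1 t x * v 1 t x + 2 * p t x) * pd j (v j t) x) := by
      intro j
      have d0 := dv 0
      have d1 := dv 1
      have dj := dv j
      have w0 := dw 0 j
      have w1 := dw 1 j
      rw [pd_sub (by fun_prop) (by fun_prop), pd_const_mul _ (by fun_prop),
        pd_add (by fun_prop) (by fun_prop), pd_mul d0 w0, pd_mul d1 w1,
        pd_mul dj (by fun_prop), pd_add (by fun_prop) (by fun_prop),
        pd_add (by fun_prop) (by fun_prop), pd_mul d0 d0, pd_mul d1 d1, pd_const_mul _ dp]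
      ring
    simp only [Fin.sum_univ_two, hdivF] at m0 m1 hd ⊢
    simp only [e2] at m0 m1
    norm_num at m0 m1
    linear_combination 2 * v 0 t x * m0 + 2 * v 1 t x * m1
      + (v 0 t x * v 0 t x + v 1 t x * v 1 t x + 2 * p t x) * hd
  rw [← integral_const_mul, ← integral_const_mul,
    ← integral_add (integrableOn_Q2 (hA.dt.slice t).continuous)
      (integrableOn_Q2 ((hB.dt.slice t).continuous.const_mul _)), ← sub_eq_zero, ← h0,
    ← integral_sub]
  · congr 1
    ext x
    rw [hF x]
    ring
  · exact integrableOn_Q2 ((hA.dt.slice t).continuous.add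
      ((hB.dt.slice t).continuous.const_mul _))
  · exact integrableOn_Q2 (((hθ.mul (hv 1)).slice t).continuous.const_mul _)

theorem stmt14
    (T α : ℝ) (hT : 0 < T) (hα : 0 < α)
    (u : ℝ → (Fin 2 → ℝ) → (Fin 2 → ℝ)) (θ p : ℝ → (Fin 2 → ℝ) → ℝ)
    (hu : ContDiff ℝ (⊤ : ℕ∞) (fun q : ℝ × (Fin 2 → ℝ) => u q.1 q.2))
    (hθ : ContDiff ℝ (⊤ : ℕ∞) (fun q : ℝ × (Fin 2 → ℝ) => θ q.1 q.2))
    (hp : ContDiff ℝ (⊤ : ℕ∞) (fun q : ℝ × (Fin 2 → ℝ) => p q.1 q.2))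
    (hup : ∀ t i, Periodic2 (fun x => u t x i))
    (hθp : ∀ t, Periodic2 (θ t)) (hpp : ∀ t, Periodic2 (p t))
    (hdiv : ∀ t x, ∑ j : Fin 2, pd j (fun y => u t y j) x = 0)
    (hmom : ∀ t ∈ Set.Icc (0 : ℝ) T, ∀ x, ∀ i : Fin 2,
      deriv (fun s => u s x i - α ^ 2 * lap (fun y => u s y i) x) t
          + (∑ j : Fin 2, u t x j * pd j (fun y => u t y i) x) + pd i (p t) x
        = θ t x * e2 i)
    (htheta : ∀ t ∈ Set.Icc (0 : ℝ) T, ∀ x,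
      deriv (fun s => θ s x) t + ∑ j : Fin 2, u t x j * pd j (θ t) x = 0) :
    ∀ t ∈ Set.Icc (0 : ℝ) T,
      Real.sqrt ((∫ x in Q2, ∑ i : Fin 2, (u t x i) ^ 2)
          + α ^ 2 * ∫ x in Q2, ∑ i : Fin 2, ∑ j : Fin 2, (pd j (fun y => u t y i) x) ^ 2)
        ≤ Real.sqrt ((∫ x in Q2, ∑ i : Fin 2, (u 0 x i) ^ 2)
            + α ^ 2 * ∫ x in Q2, ∑ i : Fin 2, ∑ j : Fin 2, (pd j (fun y => u 0 y i) x) ^ 2)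
          + t * Real.sqrt (∫ x in Q2, (θ 0 x) ^ 2) := by
  have hv : ∀ i, Sm (fun t x => u t x i) := fun i => contDiff_pi.1 hu i
  have hA : Sm (fun s y => ∑ i : Fin 2, u s y i ^ 2) := Sm.sum fun i => (hv i).sq
  have hB : Sm (fun s y => ∑ i : Fin 2, ∑ j : Fin 2, pd j (fun z => u s z i) y ^ 2) :=
    Sm.sum fun i => Sm.sum fun j => ((hv i).pd j).sq
  have hA0 : ∀ t, 0 ≤ ∫ x in Q2, ∑ i : Fin 2, u t x i ^ 2 := fun t =>
    integral_nonneg fun x => Finset.sum_nonneg fun i _ => sq_nonneg _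
  have hB0 : ∀ t, 0 ≤ α ^ 2 * ∫ x in Q2, ∑ i : Fin 2, ∑ j : Fin 2,
      pd j (fun z => u t z i) x ^ 2 := fun t =>
    mul_nonneg (sq_nonneg α) (integral_nonneg fun x =>
      Finset.sum_nonneg fun i _ => Finset.sum_nonneg fun j _ => sq_nonneg _)
  intro t ht
  refine sqrt_growth (T := T) (Real.sqrt_nonneg _) (fun s => add_nonneg (hA0 s) (hB0 s))
    (fun s => (hA.hasDerivAt_integral s).add ((hB.hasDerivAt_integral s).const_mul (α ^ 2)))
    (fun s hs => ?_) ht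
  have hbal := energy_balance (v := fun i t x => u t x i) hv hp hup hpp hdiv hθ (hmom s hs)
  have hcons := transport_L2 (v := fun i t x => u t x i) hv hθ hup hθp hdiv htheta hs
  rw [hbal, ← hcons]
  refine mul_le_mul_of_nonneg_left ((cauchy_schwarz_Q2 (Sm.slice hθ s).continuous
    ((hv 1).slice s).continuous).trans
    (mul_le_mul_of_nonneg_left (Real.sqrt_le_sqrt ?_) (Real.sqrt_nonneg _))) zero_le_two
  refine le_trans ?_ (le_add_of_nonneg_right (hB0 s))
  refine integral_mono (integrableOn_Q2 ((hv 1).sq.slice s).continuous)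
    (integrableOn_Q2 (hA.slice s).continuous) fun x => ?_
  simp only [Fin.sum_univ_two]
  exact le_add_of_nonneg_left (sq_nonneg _)
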